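/- arXiv:1809.05247 — 6 statements merged into one kernel-verified Lean document; each statement's English description precedes it below -/
import Mathlib

section
/- Let β > 0, κ > 0, W > 0 and let (e_r)_{r≥0} be a sequence of nonnegative real numbers such that for every r ≥ 0: if e_r ≤ (β/κ)·W², then e_{r+1} ≤ e_r − (κ/(2βW²))·e_r², and otherwise e_{r+1} ≤ e_r − (β/(2κ))·W². Set c = ⌈2κ·e_0/(β·W²)⌉. Then for every integer R with R > c, one has e_R ≤ 2βW²/(κ·(R − c)). (This is the deterministic quantitative core of Theorem 1: R grids with at least κ expected non-empty bins per grid yield suboptimality decaying at rate O(1/(κR)).) -/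
/-!
Write `T = βW²/κ` for the threshold, `a = 1/(2T)` and `d = T/2`. The sequence never leaves
`(-∞, T]` once there, and it loses `d` at each step while above `T`, so it is at most `T` from
index `c ≥ e₀/d` on. From then on `e_{r+1} ≤ e_r - a e_r²`. Since `x ↦ x - a x²` is monotone on
`(-∞, 1/(2a)] = (-∞, T]`, the bound `e_{c+k} ≤ 1/(a(k+2))` propagates: at `k = 0` it reads
`e_c ≤ T`, and the map sends `1/(a s)` to a value at most `1/(a(s+1))`.
-/

theorem le_max_sub_nsmul_of_descent {G : Type*} [AddCommGroup G] [LinearOrder G]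
    [IsOrderedAddMonoid G] {e : ℕ → G} {T d : G} (hstay : ∀ r, e r ≤ T → e (r + 1) ≤ T)
    (hdrop : ∀ r, T < e r → e (r + 1) ≤ e r - d) (n : ℕ) : e n ≤ max T (e 0 - n • d) := by
  induction n with
  | zero => simp
  | succ n ih =>
    rcases le_or_gt (e n) T with hsmall | hlarge
    · exact le_max_of_le_left (hstay n hsmall)
    · have hbound : e n ≤ e 0 - n • d := (le_max_iff.1 ih).resolve_left hlarge.not_ge
      refine le_max_of_le_right ?_
      calc e (n + 1) ≤ e n - d := hdrop n hlarge
        _ ≤ e 0 - n • d - d := sub_le_sub_right hbound d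
        _ = e 0 - (n + 1) • d := by rw [succ_nsmul, sub_sub]

section QuadraticDescent

variable {K : Type*} [Field K] [LinearOrder K] [IsStrictOrderedRing K] {a d s x y : K} {e : ℕ → K}

theorem sub_mul_sq_le_sub_mul_sq (ha : 0 < a) (hxy : x ≤ y) (hy : y ≤ 1 / (2 * a)) :
    x - a * x ^ 2 ≤ y - a * y ^ 2 := by
  have hsum : a * (x + y) ≤ 1 := by
    calc a * (x + y) ≤ a * (1 / (2 * a) + 1 / (2 * a)) := by gcongr; exact hxy.trans hy
      _ = 1 := by field_simp; norm_num
  have hfactor : 0 ≤ (y - x) * (1 - a * (x + y)) :=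
    mul_nonneg (sub_nonneg.2 hxy) (sub_nonneg.2 hsum)
  linarith

theorem one_div_sub_mul_sq_le (ha : 0 < a) (hs : 0 < s) :
    1 / (a * s) - a * (1 / (a * s)) ^ 2 ≤ 1 / (a * (s + 1)) := by
  calc 1 / (a * s) - a * (1 / (a * s)) ^ 2 = (s - 1) / (a * s ^ 2) := by field_simp
    _ ≤ 1 / (a * (s + 1)) := by
      rw [div_le_div_iff₀ (by positivity) (by positivity)]
      linarith

theorem le_one_div_of_quadratic_descent (ha : 0 < a) (hs : 2 ≤ s)
    (hquad : ∀ r, e r ≤ 1 / (2 * a) → e (r + 1) ≤ e r - a * e r ^ 2)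
    (h0 : e 0 ≤ 1 / (a * s)) (k : ℕ) : e k ≤ 1 / (a * (k + s)) := by
  induction k with
  | zero => simpa using h0
  | succ k ih =>
    have hks : 2 ≤ k + s := le_add_of_nonneg_of_le k.cast_nonneg hs
    have hsmall : 1 / (a * (k + s)) ≤ 1 / (2 * a) := by
      rw [mul_comm 2 a]
      gcongr
    calc e (k + 1) ≤ e k - a * e k ^ 2 := hquad k (ih.trans hsmall)
      _ ≤ 1 / (a * (k + s)) - a * (1 / (a * (k + s))) ^ 2 := sub_mul_sq_le_sub_mul_sq ha ih hsmall
      _ ≤ 1 / (a * (k + s + 1)) := one_div_sub_mul_sq_le ha (two_pos.trans_le hks)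
      _ = 1 / (a * ((k + 1 : ℕ) + s)) := by push_cast; ring

theorem le_one_div_of_constant_then_quadratic_descent (ha : 0 < a)
    (hquad : ∀ r, e r ≤ 1 / (2 * a) → e (r + 1) ≤ e r - a * e r ^ 2)
    (hconst : ∀ r, 1 / (2 * a) < e r → e (r + 1) ≤ e r - d)
    {c : ℕ} (hc : e 0 ≤ 1 / (2 * a) + c * d) (k : ℕ) : e (c + k) ≤ 1 / (a * (k + 2)) := by
  have hstay : ∀ r, e r ≤ 1 / (2 * a) → e (r + 1) ≤ 1 / (2 * a) := fun r hr =>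
    (hquad r hr).trans ((sub_le_self _ (by positivity)).trans hr)
  have hentry : e c ≤ 1 / (a * 2) := by
    rw [mul_comm a 2]
    refine (le_max_sub_nsmul_of_descent hstay hconst c).trans (max_le le_rfl ?_)
    rwa [nsmul_eq_mul, sub_le_iff_le_add]
  exact le_one_div_of_quadratic_descent (e := fun k => e (c + k)) ha le_rfl
    (fun r => hquad (c + r)) hentry k

theorem stmt_0_general {β κ W : K} (hβ : 0 < β) (hκ : 0 < κ) (hW : W ≠ 0)
    (hquad : ∀ r, e r ≤ β / κ * W ^ 2 → e (r + 1) ≤ e r - κ / (2 * β * W ^ 2) * e r ^ 2)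
    (hconst : ∀ r, β / κ * W ^ 2 < e r → e (r + 1) ≤ e r - β / (2 * κ) * W ^ 2)
    {c : ℕ} (hc : 2 * κ * e 0 / (β * W ^ 2) ≤ c) {R : ℕ} (hR : c ≤ R) :
    e R ≤ 2 * β * W ^ 2 / (κ * ((R : K) - c + 2)) := by
  have hthreshold : β / κ * W ^ 2 = 1 / (2 * (κ / (2 * β * W ^ 2))) := by field_simp
  have hentry : e 0 ≤ β / κ * W ^ 2 + c * (β / (2 * κ) * W ^ 2) := by
    calc e 0 = 2 * κ * e 0 / (β * W ^ 2) * (β / (2 * κ) * W ^ 2) := by field_simp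
      _ ≤ c * (β / (2 * κ) * W ^ 2) := by gcongr
      _ ≤ β / κ * W ^ 2 + c * (β / (2 * κ) * W ^ 2) := le_add_of_nonneg_left (by positivity)
  rw [hthreshold] at hentry
  simp only [hthreshold] at hquad hconst
  obtain ⟨k, rfl⟩ := Nat.exists_eq_add_of_le hR
  calc e (c + k) ≤ 1 / (κ / (2 * β * W ^ 2) * (k + 2)) :=
        le_one_div_of_constant_then_quadratic_descent (by positivity) hquad hconst hentry k
    _ = 2 * β * W ^ 2 / (κ * (((c + k : ℕ) : K) - c + 2)) := by
      rw [Nat.cast_add, add_sub_cancel_left]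
      field_simp

end QuadraticDescent

/-- Deterministic quantitative core of Theorem 1: a nonnegative sequence with
quadratic descent when small and constant descent when large decays at rate
`O(1/(κ R))`. -/
theorem stmt_0 (β κ W : ℝ) (hβ : 0 < β) (hκ : 0 < κ) (hW : 0 < W)
    (e : ℕ → ℝ) (he_nonneg : ∀ r, 0 ≤ e r)
    (hdesc : ∀ r, (e r ≤ (β / κ) * W ^ 2 →
        e (r + 1) ≤ e r - (κ / (2 * β * W ^ 2)) * (e r) ^ 2) ∧
      (¬ e r ≤ (β / κ) * W ^ 2 →
        e (r + 1) ≤ e r - (β / (2 * κ)) * W ^ 2))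
    (c : ℕ) (hc : c = ⌈2 * κ * e 0 / (β * W ^ 2)⌉₊) :
    ∀ R : ℕ, c < R → e R ≤ 2 * β * W ^ 2 / (κ * ((R : ℝ) - (c : ℝ))) := by
  intro R hR
  have hpos : (0 : ℝ) < R - c := sub_pos.2 (Nat.cast_lt.2 hR)
  refine (stmt_0_general hβ hκ hW.ne' (fun r => (hdesc r).1)
    (fun r hr => (hdesc r).2 hr.not_ge) (hc ▸ Nat.le_ceil _) hR.le).trans ?_
  gcongr
  exact le_add_of_nonneg_right zero_le_two
end

section
/- Let N, D be positive integers, β > 0 and ν > 0. Let z_1, …, z_N ∈ ℝ^D with all entries in {0,1}, and let B ⊆ {1,…,D} be a block of coordinates such that (i) each sample z_i has at most one nonzero coordinate with index in B, and (ii) for every j ∈ B, the number of samples i with z_{ij} = 1 is at most ν·N. Let L_1, …, L_N : ℝ → ℝ be differentiable functions satisfying L_i(b) ≤ L_i(a) + L_i'(a)·(b − a) + (β/2)·(b − a)² for all a, b ∈ ℝ, and define Loss(w) = (1/N)∑_{i=1}^N L_i(⟨w, z_i⟩). Then for every w ∈ ℝ^D and every η ∈ ℝ^D supported on B (η_j =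 0 for j ∉ B), one has Loss(w + η) − Loss(w) ≤ ∑_{j∈B} (∂Loss/∂w_j)(w)·η_j + (βν/2)·∑_{j∈B} η_j². -/
/-!
Summing the one-dimensional quadratic bounds of the samples bounds the increment of the loss by its
linear part plus `β / 2` times the weighted mean of `⟨η, z i⟩ ^ 2`. Samples with at most one active
coordinate in the block make the feature columns of the block orthogonal, so by Pythagoras this mean
equals `∑ j ∈ B, η j ^ 2 * ‖column j‖ ^ 2`, and for binary features `‖column j‖ ^ 2` is the fraction
of samples in bin `j`, which is at most `ν`.
-/

open Finset

section Definitions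

variable {ι κ R : Type*} [Fintype ι] [Fintype κ]

/-- The loss of the linear predictor `w` on the samples `z i`, with weight `p i` on the loss `L i`
of the `i`-th sample. The empirical mean has `p i = 1 / N`. -/
def weightedLoss [NonUnitalNonAssocSemiring R] (p : ι → R) (z : ι → κ → R) (L : ι → R → R)
    (w : κ → R) : R :=
  ∑ i, p i * L i (w ⬝ᵥ z i)

/-- The gradient of `weightedLoss p z L` at `w` given by the chain rule when `g i` is the derivative
of `L i`. Since only the slopes in a quadratic upper bound matter, `g` is kept arbitrary. -/
def weightedGrad [NonUnitalNonAssocSemiring R] (p : ι → R) (z : ι → κ → R) (g : ι → R → R)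
    (w : κ → R) (j : κ) : R :=
  ∑ i, p i * (g i (w ⬝ᵥ z i) * z i j)

/-- At every point `a`, the function `f` lies below the parabola of curvature `β` that touches it
at `a` with slope `g a`. For `g = deriv f` this is the upper half of `β`-smoothness. -/
def HasQuadraticUpperBound [Field R] [LE R] (β : R) (f g : R → R) : Prop :=
  ∀ a b, f b ≤ f a + g a * (b - a) + β / 2 * (b - a) ^ 2

end Definitions

section Pythagoras

variable {ι κ R : Type*} [Fintype ι]

theorem sum_mul_sum_sq_of_pairwise_orthogonal [CommSemiring R] {p : ι → R} {z : ι → κ → R}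
    {B : Finset κ}
    (horth : (B : Set κ).Pairwise fun j k ↦ ∑ i, p i * (z i j * z i k) = 0) (η : κ → R) :
    ∑ i, p i * (∑ j ∈ B, η j * z i j) ^ 2 = ∑ j ∈ B, η j ^ 2 * ∑ i, p i * z i j ^ 2 := by
  calc ∑ i, p i * (∑ j ∈ B, η j * z i j) ^ 2
      = ∑ i, ∑ j ∈ B, ∑ k ∈ B, η j * η k * (p i * (z i j * z i k)) := by
        simp_rw [sq, sum_mul_sum, mul_sum]
        exact sum_congr rfl fun i _ ↦ sum_congr rfl fun j _ ↦ sum_congr rfl fun k _ ↦ by ring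
    _ = ∑ j ∈ B, ∑ k ∈ B, η j * η k * ∑ i, p i * (z i j * z i k) := by
        rw [sum_comm]
        refine sum_congr rfl fun j _ ↦ ?_
        rw [sum_comm]
        simp_rw [mul_sum]
    _ = ∑ j ∈ B, η j ^ 2 * ∑ i, p i * z i j ^ 2 := by
        refine sum_congr rfl fun j hj ↦ ?_
        rw [sum_eq_single_of_mem j hj fun k hk hkj ↦ by rw [horth hj hk hkj.symm, mul_zero]]
        simp_rw [sq]

theorem sum_mul_dotProduct_sq_le [Fintype κ] [CommRing R] [LinearOrder R] [IsOrderedRing R]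
    {p : ι → R} {z : ι → κ → R} {B : Finset κ} {η : κ → R} {ν : R}
    (horth : (B : Set κ).Pairwise fun j k ↦ ∑ i, p i * (z i j * z i k) = 0)
    (hcol : ∀ j ∈ B, ∑ i, p i * z i j ^ 2 ≤ ν) (hη : ∀ j ∉ B, η j = 0) :
    ∑ i, p i * (η ⬝ᵥ z i) ^ 2 ≤ ν * ∑ j ∈ B, η j ^ 2 := by
  have hblock (i : ι) : η ⬝ᵥ z i = ∑ j ∈ B, η j * z i j :=
    (sum_subset B.subset_univ fun j _ hj ↦ by rw [hη j hj, zero_mul]).symm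
  calc ∑ i, p i * (η ⬝ᵥ z i) ^ 2
      = ∑ j ∈ B, η j ^ 2 * ∑ i, p i * z i j ^ 2 := by
        simp_rw [hblock, sum_mul_sum_sq_of_pairwise_orthogonal horth]
    _ ≤ ∑ j ∈ B, η j ^ 2 * ν :=
        sum_le_sum fun j hj ↦ mul_le_mul_of_nonneg_left (hcol j hj) (sq_nonneg _)
    _ = ν * ∑ j ∈ B, η j ^ 2 := by rw [← sum_mul, mul_comm]

end Pythagoras

section QuadraticBound

variable {ι κ R : Type*} [Fintype ι] [Fintype κ]

theorem weightedGrad_dotProduct [CommSemiring R] (p : ι → R) (z : ι → κ → R)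
    (g : ι → R → R) (w η : κ → R) :
    weightedGrad p z g w ⬝ᵥ η = ∑ i, p i * (g i (w ⬝ᵥ z i) * (η ⬝ᵥ z i)) := by
  simp only [weightedGrad, dotProduct, sum_mul, mul_sum]
  rw [sum_comm]
  exact sum_congr rfl fun i _ ↦ sum_congr rfl fun j _ ↦ by ring

variable [Field R] [LinearOrder R] [IsStrictOrderedRing R] {p : ι → R} {z : ι → κ → R}
  {β ν : R} {L g : ι → R → R} {B : Finset κ} {η : κ → R}

theorem weightedLoss_add_le (hp : ∀ i, 0 ≤ p i)
    (hL : ∀ i, HasQuadraticUpperBound β (L i) (g i)) (w η : κ → R) :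
    weightedLoss p z L (w + η) ≤ weightedLoss p z L w + weightedGrad p z g w ⬝ᵥ η +
      β / 2 * ∑ i, p i * (η ⬝ᵥ z i) ^ 2 := by
  rw [weightedGrad_dotProduct, weightedLoss, weightedLoss, mul_sum, ← sum_add_distrib,
    ← sum_add_distrib]
  refine sum_le_sum fun i _ ↦ ?_
  have hsample : L i ((w + η) ⬝ᵥ z i) ≤ L i (w ⬝ᵥ z i) + g i (w ⬝ᵥ z i) * (η ⬝ᵥ z i) +
      β / 2 * (η ⬝ᵥ z i) ^ 2 := by
    simpa only [add_dotProduct, add_sub_cancel_left] using hL i (w ⬝ᵥ z i) ((w + η) ⬝ᵥ z i)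
  linear_combination mul_le_mul_of_nonneg_left hsample (hp i)

theorem stmt_5_general (hp : ∀ i, 0 ≤ p i) (hβ : 0 ≤ β)
    (horth : (B : Set κ).Pairwise fun j k ↦ ∑ i, p i * (z i j * z i k) = 0)
    (hcol : ∀ j ∈ B, ∑ i, p i * z i j ^ 2 ≤ ν)
    (hL : ∀ i, HasQuadraticUpperBound β (L i) (g i)) (w : κ → R) (hη : ∀ j ∉ B, η j = 0) :
    weightedLoss p z L (w + η) - weightedLoss p z L w ≤
      ∑ j ∈ B, weightedGrad p z g w j * η j + β * ν / 2 * ∑ j ∈ B, η j ^ 2 := by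
  have hlinear : weightedGrad p z g w ⬝ᵥ η = ∑ j ∈ B, weightedGrad p z g w j * η j :=
    (sum_subset B.subset_univ fun j _ hj ↦ by rw [hη j hj, mul_zero]).symm
  have hquadratic := mul_le_mul_of_nonneg_left (sum_mul_dotProduct_sq_le horth hcol hη)
    (div_nonneg hβ zero_le_two)
  rw [← hlinear]
  linear_combination weightedLoss_add_le hp hL w η + hquadratic

end QuadraticBound

section BinaryFeatures

theorem pairwise_mul_eq_zero_of_card_filter_ne_zero_le_one {κ M : Type*} [MulZeroClass M]
    [DecidableEq M] {B : Finset κ} {x : κ → M} (hx : #{j ∈ B | x j ≠ 0} ≤ 1) :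
    (B : Set κ).Pairwise fun j k ↦ x j * x k = 0 := by
  intro j hj k hk hjk
  by_contra hne
  exact hjk <| card_le_one.mp hx j (mem_filter.mpr ⟨hj, left_ne_zero_of_mul hne⟩)
    k (mem_filter.mpr ⟨hk, right_ne_zero_of_mul hne⟩)

theorem sum_sq_eq_card_filter_eq_one {ι R : Type*} [Semiring R] [DecidableEq R]
    {s : Finset ι} {x : ι → R} (hx : ∀ i ∈ s, x i = 0 ∨ x i = 1) :
    ∑ i ∈ s, x i ^ 2 = #{i ∈ s | x i = 1} := by
  rw [← sum_boole]
  refine sum_congr rfl fun i hi ↦ ?_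
  rcases hx i hi with h | h <;> simp [h]

end BinaryFeatures

open Finset in
/-- Block-wise quadratic upper bound (inequality (11)) for Random Binning
features: if every sample has at most one nonzero binary feature in the block
`B` and every column of `B` has at most `νN` nonzeros, then the smooth loss
admits a block upper bound with curvature `βν`. -/
theorem stmt_5 (N D : ℕ) (hN : 0 < N) (hD : 0 < D) (β ν : ℝ)
    (hβ : 0 < β) (hν : 0 < ν)
    (z : Fin N → Fin D → ℝ)
    (hz01 : ∀ i j, z i j = 0 ∨ z i j = 1)
    (B : Finset (Fin D))
    (hone : ∀ i, (B.filter (fun j => z i j ≠ 0)).card ≤ 1)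
    (hcol : ∀ j ∈ B, ((univ.filter (fun i : Fin N => z i j = 1)).card : ℝ) ≤ ν * N)
    (L : Fin N → ℝ → ℝ)
    (hLdiff : ∀ i, Differentiable ℝ (L i))
    (hLsmooth : ∀ i a b, L i b ≤ L i a + deriv (L i) a * (b - a) + β / 2 * (b - a) ^ 2)
    (Loss : (Fin D → ℝ) → ℝ)
    (hLoss : ∀ w, Loss w = (1 / (N : ℝ)) * ∑ i, L i (∑ j, w j * z i j))
    (grad : (Fin D → ℝ) → Fin D → ℝ)
    (hgrad : ∀ w j, grad w j = (1 / (N : ℝ)) * ∑ i, deriv (L i) (∑ j', w j' * z i j') * z i j) :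
    ∀ w η : Fin D → ℝ, (∀ j ∉ B, η j = 0) →
      Loss (w + η) - Loss w ≤
        ∑ j ∈ B, grad w j * η j + β * ν / 2 * ∑ j ∈ B, (η j) ^ 2 := by
  intro w η hη
  have hNpos : (0 : ℝ) < N := Nat.cast_pos.mpr hN
  have hLoss_eq : Loss = weightedLoss (fun _ ↦ 1 / (N : ℝ)) z L :=
    funext fun w ↦ (hLoss w).trans (mul_sum ..)
  have hgrad_eq : grad = weightedGrad (fun _ ↦ 1 / (N : ℝ)) z fun i ↦ deriv (L i) :=
    funext₂ fun w j ↦ (hgrad w j).trans (mul_sum ..)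
  have horth : (B : Set (Fin D)).Pairwise fun j k ↦ ∑ i, 1 / (N : ℝ) * (z i j * z i k) = 0 :=
    fun j hj k hk hjk ↦ sum_eq_zero fun i _ ↦ by
      rw [pairwise_mul_eq_zero_of_card_filter_ne_zero_le_one (hone i) hj hk hjk, mul_zero]
  have hfraction : ∀ j ∈ B, ∑ i, 1 / (N : ℝ) * z i j ^ 2 ≤ ν := fun j hj ↦ by
    rw [← mul_sum, sum_sq_eq_card_filter_eq_one fun i _ ↦ hz01 i j, one_div_mul_eq_div,
      div_le_iff₀ hNpos]
    exact hcol j hj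
  rw [hLoss_eq, hgrad_eq]
  exact stmt_5_general (fun _ ↦ by positivity) hβ.le horth hfraction hLsmooth w hη
end

section
/- Let x₁, x₂ ∈ ℝ and δ > 0. Then the Lebesgue measure of the set {u ∈ [0, δ] : ⌊(x₁ − u)/δ⌋ = ⌊(x₂ − u)/δ⌋} equals δ·max(1 − |x₁ − x₂|/δ, 0). Equivalently, if u is drawn uniformly from [0, δ], the probability that x₁ and x₂ fall in the same bin of the one-dimensional grid with width δ and bias u is max(1 − |x₁ − x₂|/δ, 0). -/
/-!
Whether `x₁` and `x₂` share a bin depends on the bias `u` only modulo `δ`, so `[0, δ]` may be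
replaced by any other period. Over the period `(x₁, x₁ + δ]` the point `x₁` always has bin index
`-1`, while `x₂` has bin index `-1` exactly when `u ∈ (x₂, x₂ + δ]`. The collision set thus has the
measure of the intersection of two half-open intervals of length `δ` whose endpoints are
`|x₁ - x₂|` apart.
-/

open MeasureTheory Set

theorem measure_inter_Ioc_add_eq_of_periodic (μ : Measure ℝ) [μ.IsAddLeftInvariant]
    {A : Set ℝ} (hA : MeasurableSet A) {T : ℝ} (hT : 0 < T)
    (hper : Function.Periodic (· ∈ A) T) (a b : ℝ) :
    μ (A ∩ Ioc a (a + T)) = μ (A ∩ Ioc b (b + T)) := by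
  refine (isAddFundamentalDomain_Ioc hT a μ).measure_set_eq
    (isAddFundamentalDomain_Ioc hT b μ) hA ?_
  rintro ⟨_, n, rfl⟩
  ext u
  change n • T + u ∈ A ↔ u ∈ A
  rw [add_comm]
  exact iff_of_eq (hper.zsmul n u)

theorem volume_Ioc_add_inter_Ioc_add (a b δ : ℝ) :
    volume (Ioc a (a + δ) ∩ Ioc b (b + δ)) = ENNReal.ofReal (δ - |a - b|) := by
  rw [Ioc_inter_Ioc, Real.volume_Ioc, abs_sub_comm, ← max_sub_min_eq_abs, min_add_add_right]
  congr 1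
  ring

section FloorRing

variable {K : Type*} [Field K] [LinearOrder K] [IsStrictOrderedRing K] [FloorRing K] {δ : K}

theorem floor_sub_div_eq_iff (hδ : 0 < δ) (x u : K) (n : ℤ) :
    ⌊(x - u) / δ⌋ = n ↔ u ∈ Ioc (x - (n + 1) * δ) (x - n * δ) := by
  rw [Int.floor_eq_iff, le_div_iff₀ hδ, div_lt_iff₀ hδ, le_sub_comm, sub_lt_comm, and_comm, mem_Ioc]

theorem floor_sub_div_eq_neg_one_iff (hδ : 0 < δ) (x u : K) :
    ⌊(x - u) / δ⌋ = -1 ↔ u ∈ Ioc x (x + δ) := by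
  simpa using floor_sub_div_eq_iff hδ x u (-1)

theorem floor_sub_add_div_self (hδ : δ ≠ 0) (x u : K) :
    ⌊(x - (u + δ)) / δ⌋ = ⌊(x - u) / δ⌋ - 1 := by
  rw [← sub_sub, sub_div, div_self hδ, Int.floor_sub_one]

end FloorRing

/-- The biases `u` for which `x₁` and `x₂` lie in the same bin of the grid of width `δ`. All real
biases are allowed, so that the set is `δ`-periodic. -/
def collisionSet (δ x₁ x₂ : ℝ) : Set ℝ := {u | ⌊(x₁ - u) / δ⌋ = ⌊(x₂ - u) / δ⌋}

theorem measurableSet_collisionSet (δ x₁ x₂ : ℝ) : MeasurableSet (collisionSet δ x₁ x₂) :=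
  measurableSet_eq_fun (by fun_prop) (by fun_prop)

section Collision

variable {δ : ℝ}

theorem periodic_mem_collisionSet (hδ : δ ≠ 0) (x₁ x₂ : ℝ) :
    Function.Periodic (· ∈ collisionSet δ x₁ x₂) δ := fun u ↦ by
  simp only [collisionSet, mem_ofPred_eq, floor_sub_add_div_self hδ, sub_left_inj]

theorem collisionSet_inter_Ioc_self (hδ : 0 < δ) (x₁ x₂ : ℝ) :
    collisionSet δ x₁ x₂ ∩ Ioc x₁ (x₁ + δ) = Ioc x₁ (x₁ + δ) ∩ Ioc x₂ (x₂ + δ) := by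
  ext u
  rw [inter_comm, mem_inter_iff, mem_inter_iff]
  refine and_congr_right fun hu ↦ ?_
  rw [collisionSet, mem_ofPred_eq, (floor_sub_div_eq_neg_one_iff hδ x₁ u).2 hu, eq_comm,
    floor_sub_div_eq_neg_one_iff hδ]

theorem volume_collisionSet_inter_Ioc (hδ : 0 < δ) (x₁ x₂ a : ℝ) :
    volume (collisionSet δ x₁ x₂ ∩ Ioc a (a + δ)) = ENNReal.ofReal (δ - |x₁ - x₂|) := by
  rw [measure_inter_Ioc_add_eq_of_periodic volume (measurableSet_collisionSet δ x₁ x₂) hδ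
      (periodic_mem_collisionSet hδ.ne' x₁ x₂) a x₁,
    collisionSet_inter_Ioc_self hδ, volume_Ioc_add_inter_Ioc_add]

end Collision

/-- One-dimensional Random Binning collision probability: the Lebesgue measure
of biases `u ∈ [0, δ]` for which `x₁` and `x₂` get the same bin index
`⌊(x − u)/δ⌋` equals `δ · max(1 − |x₁ − x₂|/δ, 0)`. -/
theorem stmt_7 (x₁ x₂ δ : ℝ) (hδ : 0 < δ) :
    MeasureTheory.volume
        {u : ℝ | u ∈ Set.Icc 0 δ ∧ ⌊(x₁ - u) / δ⌋ = ⌊(x₂ - u) / δ⌋} =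
      ENNReal.ofReal (δ * max (1 - |x₁ - x₂| / δ) 0) := by
  have scaled_length : δ * max (1 - |x₁ - x₂| / δ) 0 = max (δ - |x₁ - x₂|) 0 := by
    rw [mul_max_of_nonneg _ _ hδ.le, mul_zero, mul_sub, mul_one, mul_div_cancel₀ _ hδ.ne']
  calc volume (Icc 0 δ ∩ collisionSet δ x₁ x₂)
      = volume (collisionSet δ x₁ x₂ ∩ Ioc 0 (0 + δ)) := by
        rw [inter_comm, zero_add]
        exact measure_congr ((ae_eq_refl _).inter Ioc_ae_eq_Icc.symm)
    _ = ENNReal.ofReal (δ - |x₁ - x₂|) := volume_collisionSet_inter_Ioc hδ x₁ x₂ 0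
    _ = ENNReal.ofReal (δ * max (1 - |x₁ - x₂| / δ) 0) := by
        rw [scaled_length, ENNReal.ofReal_max, ENNReal.ofReal_zero, max_eq_left zero_le]
end

section
/- Let k : (0, ∞) → ℝ be twice continuously differentiable with k''(δ) ≥ 0 for all δ > 0, and suppose lim_{δ→∞} k(δ) = 0 and lim_{δ→∞} δ·k'(δ) = 0. Then for every Δ > 0, the integral ∫_Δ^∞ (δ − Δ)·k''(δ) dδ converges and equals k(Δ). Equivalently, ∫_0^∞ δ·k''(δ)·max(1 − Δ/δ, 0) dδ = k(Δ). -/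
/-!
The function `x ↦ (x - Δ) k'(x) - k(x)` is an antiderivative of `(x - Δ) k''(x)` with value `-k(Δ)`
at `Δ`, so everything depends on its limit at infinity. Convexity supplies the limit of the boundary
term: the tangent line at `x` lies below the graph both at the reflection `2x - Δ` of `Δ` in `x` and
at the midpoint `(x + Δ) / 2`, which squeezes `(x - Δ) k'(x)` between differences of values of `k`
that tend to `0` as soon as `k` converges.
-/

section

open Filter MeasureTheory Set Topology

theorem tendsto_sub_mul_deriv_of_convexOn {f f' : ℝ → ℝ} {a l : ℝ}
    (hconv : ConvexOn ℝ (Ici a) f) (hderiv : ∀ᶠ x in atTop, HasDerivAt f (f' x) x)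
    (hlim : Tendsto f atTop (𝓝 l)) (c : ℝ) :
    Tendsto (fun x => (x - c) * f' x) atTop (𝓝 0) := by
  have tendsto_midpoint : Tendsto (fun x : ℝ => (x + c) / 2) atTop atTop :=
    (tendsto_atTop_add_const_right _ c tendsto_id).atTop_div_const two_pos
  have tendsto_reflection : Tendsto (fun x : ℝ => 2 * x - c) atTop atTop :=
    tendsto_atTop_add_const_right _ (-c) (tendsto_id.const_mul_atTop two_pos)
  have lower_tendsto : Tendsto (fun x => 2 * (f x - f ((x + c) / 2))) atTop (𝓝 0) := by
    simpa using (hlim.sub (hlim.comp tendsto_midpoint)).const_mul 2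
  have upper_tendsto : Tendsto (fun x => f (2 * x - c) - f x) atTop (𝓝 0) := by
    simpa using (hlim.comp tendsto_reflection).sub hlim
  refine tendsto_of_tendsto_of_tendsto_of_le_of_le' lower_tendsto upper_tendsto ?_ ?_
  · filter_upwards [hderiv, eventually_gt_atTop c, eventually_ge_atTop a,
      tendsto_midpoint.eventually_ge_atTop a] with x hx hcx hax hmid
    have slope_le := hconv.slope_le_of_hasDerivAt hmid hax (by linarith) hx
    rw [slope_def_field, div_le_iff₀ (by linarith)] at slope_le
    linarith
  · filter_upwards [hderiv, eventually_gt_atTop c, eventually_ge_atTop a,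
      tendsto_reflection.eventually_ge_atTop a] with x hx hcx hax hrefl
    have le_slope := hconv.le_slope_of_hasDerivAt hax hrefl (by linarith) hx
    rw [slope_def_field, le_div_iff₀ (by linarith)] at le_slope
    linarith

theorem hasDerivAt_sub_mul_deriv_sub {𝕜 : Type*} [NontriviallyNormedField 𝕜] {f f' : 𝕜 → 𝕜}
    {f'' x : 𝕜} (hf : HasDerivAt f (f' x) x) (hf' : HasDerivAt f' f'' x) (a : 𝕜) :
    HasDerivAt (fun y => (y - a) * f' y - f y) ((x - a) * f'') x :=
  ((((hasDerivAt_id x).sub_const a).mul hf').sub hf).congr_deriv (by simp)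

section SecondDerivative

variable {f f' f'' : ℝ → ℝ} {a l : ℝ}

theorem tendsto_sub_mul_deriv_sub_of_nonneg (hf : ∀ x ∈ Ici a, HasDerivAt f (f' x) x)
    (hf' : ∀ x ∈ Ici a, HasDerivAt f' (f'' x) x) (hf'' : ∀ x ∈ Ioi a, 0 ≤ f'' x)
    (hlim : Tendsto f atTop (𝓝 l)) :
    Tendsto (fun x => (x - a) * f' x - f x) atTop (𝓝 (-l)) := by
  have hconv : ConvexOn ℝ (Ici a) f := by
    refine convexOn_of_hasDerivWithinAt2_nonneg (convex_Ici a)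
      (fun x hx => (hf x hx).continuousAt.continuousWithinAt)
      (fun x hx => (hf x (interior_subset hx)).hasDerivWithinAt)
      (fun x hx => (hf' x (interior_subset hx)).hasDerivWithinAt) ?_
    rwa [interior_Ici]
  have hderiv : ∀ᶠ x in atTop, HasDerivAt f (f' x) x := (eventually_ge_atTop a).mono hf
  simpa using (tendsto_sub_mul_deriv_of_convexOn hconv hderiv hlim a).sub hlim

theorem integrableOn_Ioi_sub_mul_of_nonneg (hf : ∀ x ∈ Ici a, HasDerivAt f (f' x) x)
    (hf' : ∀ x ∈ Ici a, HasDerivAt f' (f'' x) x) (hf'' : ∀ x ∈ Ioi a, 0 ≤ f'' x)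
    (hlim : Tendsto f atTop (𝓝 l)) :
    IntegrableOn (fun x => (x - a) * f'' x) (Ioi a) :=
  integrableOn_Ioi_deriv_of_nonneg'
    (fun x hx => hasDerivAt_sub_mul_deriv_sub (hf x hx) (hf' x hx) a)
    (fun x hx => mul_nonneg (sub_nonneg.2 (le_of_lt hx)) (hf'' x hx))
    (tendsto_sub_mul_deriv_sub_of_nonneg hf hf' hf'' hlim)

theorem integral_Ioi_sub_mul_of_nonneg (hf : ∀ x ∈ Ici a, HasDerivAt f (f' x) x)
    (hf' : ∀ x ∈ Ici a, HasDerivAt f' (f'' x) x) (hf'' : ∀ x ∈ Ioi a, 0 ≤ f'' x)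
    (hlim : Tendsto f atTop (𝓝 l)) :
    ∫ x in Ioi a, (x - a) * f'' x = f a - l := by
  rw [integral_Ioi_of_hasDerivAt_of_tendsto'
    (fun x hx => hasDerivAt_sub_mul_deriv_sub (hf x hx) (hf' x hx) a)
    (integrableOn_Ioi_sub_mul_of_nonneg hf hf' hf'' hlim)
    (tendsto_sub_mul_deriv_sub_of_nonneg hf hf' hf'' hlim)]
  ring

end SecondDerivative

theorem mul_max_one_sub_div_zero {K : Type*} [Field K] [LinearOrder K] [IsStrictOrderedRing K]
    {x : K} (hx : 0 < x) (a : K) :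
    x * max (1 - a / x) 0 = max (x - a) 0 := by
  rw [mul_max_of_nonneg _ _ hx.le, mul_sub, mul_one, mul_div_cancel₀ _ hx.ne', mul_zero]

theorem integral_Ioi_mul_max_one_sub_div {a : ℝ} (ha : 0 ≤ a) (g : ℝ → ℝ) :
    ∫ x in Ioi 0, x * g x * max (1 - a / x) 0 = ∫ x in Ioi a, (x - a) * g x := by
  calc ∫ x in Ioi 0, x * g x * max (1 - a / x) 0
      = ∫ x in Ioi 0, max (x - a) 0 * g x :=
        setIntegral_congr_fun measurableSet_Ioi fun x hx => by
          rw [mul_right_comm, mul_max_one_sub_div_zero hx]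
    _ = ∫ x in Ioi a, max (x - a) 0 * g x :=
        setIntegral_eq_of_subset_of_forall_sdiff_eq_zero measurableSet_Ioi (Ioi_subset_Ioi ha)
          fun x hx => by rw [max_eq_right (sub_nonpos.2 (not_lt.1 hx.2)), zero_mul]
    _ = ∫ x in Ioi a, (x - a) * g x :=
        setIntegral_congr_fun measurableSet_Ioi fun x hx => by
          rw [max_eq_left (sub_nonneg.2 (mem_Ioi.1 hx).le)]

theorem stmt_8_general {k : ℝ → ℝ} {l : ℝ} (hk : DifferentiableOn ℝ k (Ioi 0))
    (hk' : DifferentiableOn ℝ (deriv k) (Ioi 0)) (hk'' : ∀ δ ∈ Ioi (0 : ℝ), 0 ≤ deriv (deriv k) δ)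
    (hlim : Tendsto k atTop (𝓝 l)) {Δ : ℝ} (hΔ : 0 < Δ) :
    IntegrableOn (fun δ => (δ - Δ) * deriv (deriv k) δ) (Ioi Δ) ∧
      ∫ δ in Ioi Δ, (δ - Δ) * deriv (deriv k) δ = k Δ - l ∧
      ∫ δ in Ioi 0, δ * deriv (deriv k) δ * max (1 - Δ / δ) 0 = k Δ - l := by
  have hasDerivAt_k : ∀ x ∈ Ici Δ, HasDerivAt k (deriv k x) x := fun x hx =>
    hk.hasDerivAt (Ioi_mem_nhds (hΔ.trans_le hx))
  have hasDerivAt_k' : ∀ x ∈ Ici Δ, HasDerivAt (deriv k) (deriv (deriv k) x) x := fun x hx =>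
    hk'.hasDerivAt (Ioi_mem_nhds (hΔ.trans_le hx))
  have nonneg_k'' : ∀ x ∈ Ioi Δ, 0 ≤ deriv (deriv k) x := fun x hx => hk'' x (hΔ.trans hx)
  rw [integral_Ioi_mul_max_one_sub_div hΔ.le]
  have integral_eq := integral_Ioi_sub_mul_of_nonneg hasDerivAt_k hasDerivAt_k' nonneg_k'' hlim
  exact ⟨integrableOn_Ioi_sub_mul_of_nonneg hasDerivAt_k hasDerivAt_k' nonneg_k'' hlim,
    integral_eq, integral_eq⟩

end

open MeasureTheory Filter in
/-- Width-distribution identity: for a kernel component `k` with nonnegative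
second derivative vanishing suitably at infinity,
`∫_Δ^∞ (δ − Δ) k''(δ) dδ = k(Δ)`, equivalently
`∫_0^∞ δ k''(δ) max(1 − Δ/δ, 0) dδ = k(Δ)`. -/
theorem stmt_8 (k : ℝ → ℝ)
    (hC2 : ContDiffOn ℝ 2 k (Set.Ioi 0))
    (hconv : ∀ δ ∈ Set.Ioi (0 : ℝ), 0 ≤ deriv (deriv k) δ)
    (hk0 : Tendsto k atTop (nhds 0))
    (hk1 : Tendsto (fun δ => δ * deriv k δ) atTop (nhds 0)) :
    ∀ Δ : ℝ, 0 < Δ →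
      IntegrableOn (fun δ => (δ - Δ) * deriv (deriv k) δ) (Set.Ioi Δ) ∧
      (∫ δ in Set.Ioi Δ, (δ - Δ) * deriv (deriv k) δ) = k Δ ∧
      (∫ δ in Set.Ioi (0 : ℝ), δ * deriv (deriv k) δ * max (1 - Δ / δ) 0) = k Δ := by
  have hk' := (hC2.deriv_of_isOpen (m := 1) isOpen_Ioi (by norm_num)).differentiableOn one_ne_zero
  simpa using fun Δ => stmt_8_general (hC2.differentiableOn two_ne_zero) hk' hconv hk0 (Δ := Δ)
end

section
/- Let d be a positive integer, x, y ∈ ℝ^d and δ₁, …, δ_d > 0. Then the measure, with respect to the product of the uniform distributions on [0, δ_j] for j = 1, …, d, of the set {u ∈ ∏_{j=1}^d [0, δ_j] : ⌊(x_j − u_j)/δ_j⌋ = ⌊(y_j − u_j)/δ_j⌋ for all j} equals ∏_{j=1}^d max(1 − |x_j − y_j|/δ_j, 0). -/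
/-!
By independence it suffices to treat one coordinate, with `x ≤ y` say. The set of biases `u` for
which `x` and `y` share a bin is `δ`-periodic, so its measure is the same on every window of length
`δ`. On the window `(y - δ, y]` the bin index of `y` is `0` and the points collide exactly when
`u ≤ x`, so the collision set has length `max (δ - (y - x)) 0` there.
-/

section

open MeasureTheory ProbabilityTheory Set

theorem volume_inter_Ioc_eq_of_periodic {A : Set ℝ} {T : ℝ} (hT : 0 < T) (hA : MeasurableSet A)
    (hper : Function.Periodic (· ∈ A) T) (a b : ℝ) :
    volume (A ∩ Ioc a (a + T)) = volume (A ∩ Ioc b (b + T)) := by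
  refine (isAddFundamentalDomain_Ioc hT a).measure_set_eq (isAddFundamentalDomain_Ioc hT b) hA ?_
  rintro ⟨_, n, rfl⟩
  ext u
  change n • T + u ∈ A ↔ u ∈ A
  rw [add_comm]
  exact (hper.zsmul n u).to_iff

/-- The biases `u` for which `x` and `y` have the same bin index in the one-dimensional grid of
width `δ` and bias `u`. No range is imposed on `u`, which makes the set periodic. -/
def binCollisionSet (x y δ : ℝ) : Set ℝ :=
  {u | ⌊(x - u) / δ⌋ = ⌊(y - u) / δ⌋}

variable {x y δ : ℝ}

theorem binCollisionSet_comm (x y δ : ℝ) : binCollisionSet x y δ = binCollisionSet y x δ :=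
  ext fun _ => eq_comm

theorem measurableSet_binCollisionSet (x y δ : ℝ) : MeasurableSet (binCollisionSet x y δ) :=
  measurableSet_eq_fun (by fun_prop) (by fun_prop)

theorem periodic_mem_binCollisionSet (hδ : δ ≠ 0) (x y : ℝ) :
    Function.Periodic (· ∈ binCollisionSet x y δ) δ := by
  have floor_shift (z u : ℝ) : ⌊(z - (u + δ)) / δ⌋ = ⌊(z - u) / δ⌋ - 1 := by
    rw [← sub_sub, sub_div, div_self hδ, Int.floor_sub_one]
  intro u
  simp only [binCollisionSet, mem_ofPred_eq, floor_shift, sub_left_inj]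

theorem binCollisionSet_inter_Ioc (hδ : 0 < δ) (hxy : x ≤ y) :
    binCollisionSet x y δ ∩ Ioc (y - δ) y = Ioc (y - δ) x := by
  have floor_eq_zero_iff (z u : ℝ) : ⌊(z - u) / δ⌋ = 0 ↔ u ≤ z ∧ z - δ < u := by
    rw [Int.floor_eq_zero_iff, mem_Ico, le_div_iff₀ hδ, zero_mul, div_lt_one hδ, sub_nonneg,
      sub_lt_comm]
  ext u
  constructor
  · rintro ⟨hcoll, hlower, hupper⟩
    have hx : ⌊(x - u) / δ⌋ = 0 := hcoll.trans ((floor_eq_zero_iff y u).2 ⟨hupper, hlower⟩)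
    exact ⟨hlower, ((floor_eq_zero_iff x u).1 hx).1⟩
  · rintro ⟨hlower, hux⟩
    have hx : ⌊(x - u) / δ⌋ = 0 := (floor_eq_zero_iff x u).2 ⟨hux, by linarith⟩
    have hy : ⌊(y - u) / δ⌋ = 0 := (floor_eq_zero_iff y u).2 ⟨hux.trans hxy, hlower⟩
    exact ⟨hx.trans hy.symm, hlower, hux.trans hxy⟩

theorem volume_binCollisionSet_inter_Ioc (hδ : 0 < δ) (x y a : ℝ) :
    volume (binCollisionSet x y δ ∩ Ioc a (a + δ)) = ENNReal.ofReal (δ - |x - y|) := by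
  wlog hxy : x ≤ y generalizing x y
  · rw [binCollisionSet_comm, abs_sub_comm]
    exact this y x (le_of_not_ge hxy)
  calc volume (binCollisionSet x y δ ∩ Ioc a (a + δ))
      = volume (binCollisionSet x y δ ∩ Ioc (y - δ) (y - δ + δ)) :=
        volume_inter_Ioc_eq_of_periodic hδ (measurableSet_binCollisionSet x y δ)
          (periodic_mem_binCollisionSet hδ.ne' x y) a (y - δ)
    _ = volume (Ioc (y - δ) x) := by rw [sub_add_cancel, binCollisionSet_inter_Ioc hδ hxy]
    _ = ENNReal.ofReal (δ - |x - y|) := by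
        rw [Real.volume_Ioc, abs_of_nonpos (sub_nonpos.2 hxy)]
        ring_nf

theorem cond_Icc_binCollisionSet (hδ : 0 < δ) (x y a : ℝ) :
    volume[|Icc a (a + δ)] (binCollisionSet x y δ) =
      ENNReal.ofReal (max (1 - |x - y| / δ) 0) := by
  have volume_inter_Icc :
      volume (Icc a (a + δ) ∩ binCollisionSet x y δ) = ENNReal.ofReal (δ - |x - y|) := by
    rw [inter_comm, ← volume_binCollisionSet_inter_Ioc hδ x y a]
    exact measure_congr (ae_eq_rfl.inter Ioc_ae_eq_Icc.symm)
  rw [cond_apply measurableSet_Icc, volume_inter_Icc, Real.volume_Icc, add_sub_cancel_left,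
    mul_comm, ← div_eq_mul_inv, ← ENNReal.ofReal_div_of_pos hδ, sub_div, div_self hδ.ne',
    ENNReal.ofReal_max, ENNReal.ofReal_zero, max_eq_left zero_le]

theorem stmt_10_general {ι : Type*} [Fintype ι] (x y a : ι → ℝ) {δ : ι → ℝ} (hδ : ∀ j, 0 < δ j) :
    Measure.pi (fun j => volume[|Icc (a j) (a j + δ j)])
        {u | u ∈ univ.pi (fun j => Icc (a j) (a j + δ j)) ∧
          ∀ j, ⌊(x j - u j) / δ j⌋ = ⌊(y j - u j) / δ j⌋} =
      ENNReal.ofReal (∏ j, max (1 - |x j - y j| / δ j) 0) := by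
  have collision_eq_pi :
      {u | u ∈ univ.pi (fun j => Icc (a j) (a j + δ j)) ∧
        ∀ j, ⌊(x j - u j) / δ j⌋ = ⌊(y j - u j) / δ j⌋} =
      univ.pi (fun j => Icc (a j) (a j + δ j) ∩ binCollisionSet (x j) (y j) (δ j)) := by
    ext u
    simp only [binCollisionSet, mem_ofPred_eq, mem_univ_pi, mem_inter_iff, forall_and]
  rw [collision_eq_pi, Measure.pi_pi, ENNReal.ofReal_prod_of_nonneg fun j _ => le_max_right _ _]
  refine Finset.prod_congr rfl fun j _ => ?_
  rw [cond_inter_self measurableSet_Icc, cond_Icc_binCollisionSet (hδ j)]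

end

open MeasureTheory in
/-- Multi-dimensional Random Binning collision probability: with per-coordinate
biases drawn independently and uniformly from `[0, δ_j]`, the probability that
all coordinate-wise bin indices of `x` and `y` agree factorizes into
`∏_j max(1 − |x_j − y_j|/δ_j, 0)`. -/
theorem stmt_10 (d : ℕ) (hd : 0 < d) (x y : Fin d → ℝ) (δ : Fin d → ℝ)
    (hδ : ∀ j, 0 < δ j)
    (unif : Fin d → Measure ℝ)
    (hunif : ∀ j, unif j =
      (MeasureTheory.volume (Set.Icc (0 : ℝ) (δ j)))⁻¹ •
        MeasureTheory.volume.restrict (Set.Icc (0 : ℝ) (δ j))) :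
    Measure.pi unif
        {u : Fin d → ℝ | u ∈ Set.univ.pi (fun j => Set.Icc (0 : ℝ) (δ j)) ∧
          ∀ j, ⌊(x j - u j) / δ j⌋ = ⌊(y j - u j) / δ j⌋} =
      ENNReal.ofReal (∏ j, max (1 - |x j - y j| / δ j) 0) := by
  obtain rfl : unif = fun j => ProbabilityTheory.cond volume (Set.Icc 0 (δ j)) := funext hunif
  simpa only [zero_add] using stmt_10_general x y (fun _ => 0) hδ
end

section
/- Let k : (0, ∞) → ℝ be twice continuously differentiable with k''(δ) ≥ 0 for all δ > 0, lim_{δ→∞} k(δ) = 0, lim_{δ→∞} δ·k'(δ) = 0, and suppose ∫_0^∞ δ·k''(δ) dδ = 1, so that p(δ) = δ·k''(δ) is a probability density on (0, ∞). Then for all x₁, x₂ ∈ ℝ with x₁ ≠ x₂, ∫_0^∞ p(δ) · (1/δ) · Leb{u ∈ [0, δ] : ⌊(x₁ − u)/δ⌋ = ⌊(x₂ − u)/δ⌋} dδ = k(|x₁ − x₂|), where Leb denotes Lebesgue measure. That is, drawing the width δ from p and then the bias u uniformly from [0, δ], the probability that x₁ and x₂ fall in the same bin equals k(|x₁ − x₂|).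 -/
/-!
The biases that put `x₁` and `x₂` in the same bin form a `δ`-periodic set, so the window `[0, δ]`
may be replaced by `(x₁ - δ, x₁]`, where for `x₁ ≤ x₂` this set is the interval `(x₂ - δ, x₁]`, of
length `max (δ - |x₁ - x₂|) 0`. Averaging over the width then leaves `∫ (δ - Δ) k''(δ) dδ` over
`δ > Δ = |x₁ - x₂|`, whose integrand is the derivative of `(δ - Δ) k'(δ) - k(δ)`.
-/

open MeasureTheory Filter Set Topology

lemma measure_inter_Ioc_eq_of_periodic {μ : Measure ℝ} [μ.IsAddLeftInvariant] {A : Set ℝ} {T : ℝ}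
    (hT : 0 < T) (hA : MeasurableSet A) (hper : Function.Periodic (· ∈ A) T) (a b : ℝ) :
    μ (A ∩ Ioc a (a + T)) = μ (A ∩ Ioc b (b + T)) := by
  refine (isAddFundamentalDomain_Ioc hT a μ).measure_set_eq
    (isAddFundamentalDomain_Ioc hT b μ) hA ?_
  rintro ⟨_, n, rfl⟩
  ext u
  exact (congrArg (· ∈ A) (add_comm (n • T) u)).trans (hper.zsmul n u) |>.to_iff

lemma floor_div_eq_zero_iff {K : Type*} [Field K] [LinearOrder K] [IsStrictOrderedRing K]
    [FloorRing K] {x d : K} (hd : 0 < d) : ⌊x / d⌋ = 0 ↔ 0 ≤ x ∧ x < d := by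
  rw [Int.floor_eq_zero_iff, mem_Ico, le_div_iff₀ hd, zero_mul, div_lt_one hd]

section Bins

/-- The biases `u` for which the Random Binning grid of width `δ` assigns `x₁` and `x₂` to the
same bin. -/
def sameBinBiases (x₁ x₂ δ : ℝ) : Set ℝ :=
  {u | ⌊(x₁ - u) / δ⌋ = ⌊(x₂ - u) / δ⌋}

variable {x₁ x₂ δ : ℝ}

lemma sameBinBiases_comm (x₁ x₂ δ : ℝ) : sameBinBiases x₁ x₂ δ = sameBinBiases x₂ x₁ δ :=
  Set.ext fun _ => eq_comm

lemma measurableSet_sameBinBiases (x₁ x₂ δ : ℝ) : MeasurableSet (sameBinBiases x₁ x₂ δ) :=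
  measurableSet_eq_fun (by fun_prop) (by fun_prop)

lemma periodic_mem_sameBinBiases (x₁ x₂ : ℝ) (hδ : δ ≠ 0) :
    Function.Periodic (· ∈ sameBinBiases x₁ x₂ δ) δ := by
  intro u
  have floor_shift (x : ℝ) : ⌊(x - (u + δ)) / δ⌋ = ⌊(x - u) / δ⌋ - 1 := by
    rw [← sub_sub, sub_div _ δ, div_self hδ, Int.floor_sub_one]
  simp only [sameBinBiases, mem_ofPred_eq, floor_shift, sub_left_inj]

lemma sameBinBiases_inter_Ioc (hδ : 0 < δ) (h : x₁ ≤ x₂) :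
    sameBinBiases x₁ x₂ δ ∩ Ioc (x₁ - δ) x₁ = Ioc (x₂ - δ) x₁ := by
  ext u
  have mem_iff (hu : u ∈ Ioc (x₁ - δ) x₁) : u ∈ sameBinBiases x₁ x₂ δ ↔ x₂ - δ < u := by
    have floor_eq_zero : ⌊(x₁ - u) / δ⌋ = 0 :=
      (floor_div_eq_zero_iff hδ).2 ⟨by linarith [hu.2], by linarith [hu.1]⟩
    rw [sameBinBiases, mem_ofPred_eq, floor_eq_zero, eq_comm, floor_div_eq_zero_iff hδ]
    exact ⟨fun hu₂ => by linarith [hu₂.2], fun hu₂ => ⟨by linarith [hu.2], by linarith⟩⟩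
  constructor
  · rintro ⟨hbin, hu⟩
    exact ⟨(mem_iff hu).1 hbin, hu.2⟩
  · rintro ⟨hlt, hle⟩
    have hu : u ∈ Ioc (x₁ - δ) x₁ := ⟨by linarith, hle⟩
    exact ⟨(mem_iff hu).2 hlt, hu⟩

lemma volume_Icc_inter_sameBinBiases (x₁ x₂ : ℝ) (hδ : 0 < δ) :
    volume (Icc 0 δ ∩ sameBinBiases x₁ x₂ δ) = ENNReal.ofReal (δ - |x₁ - x₂|) := by
  wlog h : x₁ ≤ x₂ generalizing x₁ x₂
  · rw [sameBinBiases_comm, abs_sub_comm, this x₂ x₁ (le_of_not_ge h)]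
  calc volume (Icc 0 δ ∩ sameBinBiases x₁ x₂ δ)
      = volume (sameBinBiases x₁ x₂ δ ∩ Ioc 0 (0 + δ)) := by
        rw [inter_comm, zero_add]
        exact measure_congr ((ae_eq_refl _).inter Ioc_ae_eq_Icc.symm)
    _ = volume (sameBinBiases x₁ x₂ δ ∩ Ioc (x₁ - δ) (x₁ - δ + δ)) :=
        measure_inter_Ioc_eq_of_periodic hδ (measurableSet_sameBinBiases x₁ x₂ δ)
          (periodic_mem_sameBinBiases x₁ x₂ hδ.ne') _ _
    _ = ENNReal.ofReal (δ - |x₁ - x₂|) := by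
        rw [sub_add_cancel, sameBinBiases_inter_Ioc hδ h, Real.volume_Ioc, abs_sub_comm,
          abs_of_nonneg (sub_nonneg.2 h)]
        congr 1
        ring

lemma one_div_mul_volume_Icc_inter_sameBinBiases (x₁ x₂ : ℝ) (hδ : 0 < δ) :
    1 / δ * (volume (Icc 0 δ ∩ sameBinBiases x₁ x₂ δ)).toReal = max (1 - |x₁ - x₂| / δ) 0 := by
  rw [volume_Icc_inter_sameBinBiases x₁ x₂ hδ, ENNReal.toReal_ofReal',
    mul_max_of_nonneg _ _ (one_div_pos.2 hδ).le, mul_zero]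
  congr 1
  field_simp

end Bins

section WidthDistribution

variable {E : Type*} [NormedAddCommGroup E] [NormedSpace ℝ E]

lemma integral_Ioi_sub_smul_of_hasDerivAt [CompleteSpace E] {f f' f'' : ℝ → E} {a : ℝ} {l : E}
    (hf : ∀ x ∈ Ici a, HasDerivAt f (f' x) x) (hf' : ∀ x ∈ Ici a, HasDerivAt f' (f'' x) x)
    (hint : IntegrableOn (fun x => (x - a) • f'' x) (Ioi a))
    (hlim : Tendsto f atTop (𝓝 l)) (hlim' : Tendsto (fun x => x • f' x) atTop (𝓝 0)) :
    ∫ x in Ioi a, (x - a) • f'' x = f a - l := by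
  have deriv_primitive (x : ℝ) (hx : x ∈ Ici a) :
      HasDerivAt (fun x => (x - a) • f' x - f x) ((x - a) • f'' x) x := by
    refine ((((hasDerivAt_id x).sub_const a).smul (hf' x hx)).sub (hf x hx)).congr_deriv ?_
    rw [one_smul, add_sub_cancel_right, id]
  have tendsto_deriv : Tendsto f' atTop (𝓝 0) := by
    have := tendsto_inv_atTop_zero.smul hlim'
    rw [smul_zero] at this
    refine this.congr' ?_
    filter_upwards [eventually_ne_atTop 0] with x hx using inv_smul_smul₀ hx _
  have tendsto_primitive : Tendsto (fun x => (x - a) • f' x - f x) atTop (𝓝 (-l)) := by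
    simpa [sub_smul] using (hlim'.sub (tendsto_deriv.const_smul a)).sub hlim
  rw [integral_Ioi_of_hasDerivAt_of_tendsto' deriv_primitive hint tendsto_primitive]
  simp [neg_add_eq_sub]

lemma integrableOn_Ioi_sub_smul {f : ℝ → E} {a : ℝ} (ha : 0 ≤ a)
    (hf : IntegrableOn (fun x => x • f x) (Ioi a)) :
    IntegrableOn (fun x => (x - a) • f x) (Ioi a) := by
  have bounded : ∀ᵐ x ∂volume.restrict (Ioi a), ‖1 - a / x‖ ≤ 1 := by
    filter_upwards [ae_restrict_mem measurableSet_Ioi] with x (hx : a < x)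
    have hx₀ : 0 < x := ha.trans_lt hx
    rw [Real.norm_of_nonneg (sub_nonneg.2 ((div_le_one hx₀).2 hx.le))]
    exact sub_le_self _ (by positivity)
  have integrable_smul : IntegrableOn (fun x => (1 - a / x) • x • f x) (Ioi a) :=
    Integrable.bdd_smul hf 1 (by fun_prop) bounded
  refine integrable_smul.congr_fun (fun x hx => ?_) measurableSet_Ioi
  have hx₀ : x ≠ 0 := (ha.trans_lt hx).ne'
  simp only [smul_smul, sub_mul, one_mul, div_mul_cancel₀ a hx₀]

lemma integral_Ioi_mul_max_one_sub_div_s11 {k k' k'' : ℝ → ℝ} {Δ : ℝ} (hΔ : 0 ≤ Δ)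
    (hk : ∀ δ ∈ Ici Δ, HasDerivAt k (k' δ) δ) (hk' : ∀ δ ∈ Ici Δ, HasDerivAt k' (k'' δ) δ)
    (hint : IntegrableOn (fun δ => δ * k'' δ) (Ioi Δ))
    (hlim : Tendsto k atTop (𝓝 0)) (hlim' : Tendsto (fun δ => δ * k' δ) atTop (𝓝 0)) :
    ∫ δ in Ioi 0, δ * k'' δ * max (1 - Δ / δ) 0 = k Δ := by
  have vanish_of_le (δ : ℝ) (hδ : δ ∈ Ioi 0 \ Ioi Δ) : δ * k'' δ * max (1 - Δ / δ) 0 = 0 := by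
    have : 1 ≤ Δ / δ := (one_le_div hδ.1).2 (not_lt.1 hδ.2)
    rw [max_eq_right (sub_nonpos.2 this), mul_zero]
  have eq_of_lt (δ : ℝ) (hδ : δ ∈ Ioi Δ) :
      δ * k'' δ * max (1 - Δ / δ) 0 = (δ - Δ) * k'' δ := by
    have hδ₀ : 0 < δ := hΔ.trans_lt hδ
    rw [max_eq_left (sub_nonneg.2 ((div_le_one hδ₀).2 (le_of_lt hδ)))]
    field_simp
  calc ∫ δ in Ioi 0, δ * k'' δ * max (1 - Δ / δ) 0
      = ∫ δ in Ioi Δ, δ * k'' δ * max (1 - Δ / δ) 0 :=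
        setIntegral_eq_of_subset_of_forall_sdiff_eq_zero measurableSet_Ioi
          (Ioi_subset_Ioi hΔ) vanish_of_le
    _ = ∫ δ in Ioi Δ, (δ - Δ) * k'' δ := setIntegral_congr_fun measurableSet_Ioi eq_of_lt
    _ = k Δ - 0 := integral_Ioi_sub_smul_of_hasDerivAt hk hk'
        (integrableOn_Ioi_sub_smul hΔ hint) hlim hlim'
    _ = k Δ := sub_zero _

end WidthDistribution

theorem stmt_11_general {k k' k'' : ℝ → ℝ} {x₁ x₂ : ℝ}
    (hk : ∀ δ ∈ Ici |x₁ - x₂|, HasDerivAt k (k' δ) δ)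
    (hk' : ∀ δ ∈ Ici |x₁ - x₂|, HasDerivAt k' (k'' δ) δ)
    (hint : IntegrableOn (fun δ => δ * k'' δ) (Ioi |x₁ - x₂|))
    (hlim : Tendsto k atTop (𝓝 0)) (hlim' : Tendsto (fun δ => δ * k' δ) atTop (𝓝 0)) :
    ∫ δ in Ioi 0, δ * k'' δ * (1 / δ) * (volume (Icc 0 δ ∩ sameBinBiases x₁ x₂ δ)).toReal =
      k |x₁ - x₂| := by
  rw [← integral_Ioi_mul_max_one_sub_div_s11 (abs_nonneg _) hk hk' hint hlim hlim']
  refine setIntegral_congr_fun measurableSet_Ioi fun δ hδ => ?_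
  simp only [mul_assoc, ← one_div_mul_volume_Icc_inter_sameBinBiases x₁ x₂ hδ]

open MeasureTheory Filter in
/-- The Random Binning generating process is an unbiased estimator of the
kernel: drawing the width `δ` from the density `p(δ) = δ k''(δ)` and the bias
`u` uniformly from `[0, δ]`, the collision probability of `x₁` and `x₂`
equals `k(|x₁ − x₂|)`. -/
theorem stmt_11 (k : ℝ → ℝ)
    (hC2 : ContDiffOn ℝ 2 k (Set.Ioi 0))
    (hconv : ∀ δ ∈ Set.Ioi (0 : ℝ), 0 ≤ deriv (deriv k) δ)
    (hk0 : Tendsto k atTop (nhds 0))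
    (hk1 : Tendsto (fun δ => δ * deriv k δ) atTop (nhds 0))
    (hp : (∫ δ in Set.Ioi (0 : ℝ), δ * deriv (deriv k) δ) = 1) :
    ∀ x₁ x₂ : ℝ, x₁ ≠ x₂ →
      (∫ δ in Set.Ioi (0 : ℝ),
          (δ * deriv (deriv k) δ) * (1 / δ) *
            (MeasureTheory.volume
              {u : ℝ | u ∈ Set.Icc 0 δ ∧
                ⌊(x₁ - u) / δ⌋ = ⌊(x₂ - u) / δ⌋}).toReal) =
        k |x₁ - x₂| := by
  intro x₁ x₂ hne
  have pos {δ : ℝ} (hδ : |x₁ - x₂| ≤ δ) : 0 < δ := (abs_sub_pos.2 hne).trans_le hδ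
  have hdiff : DifferentiableOn ℝ k (Set.Ioi 0) := hC2.differentiableOn two_ne_zero
  have hdiff' : DifferentiableOn ℝ (deriv k) (Set.Ioi 0) :=
    (hC2.deriv_of_isOpen (m := 1) isOpen_Ioi (by norm_num)).differentiableOn one_ne_zero
  have hint : IntegrableOn (fun δ => δ * deriv (deriv k) δ) (Set.Ioi 0) :=
    integrable_of_integral_eq_one hp
  exact stmt_11_general
    (fun δ hδ => (hdiff.differentiableAt (Ioi_mem_nhds (pos hδ))).hasDerivAt)
    (fun δ hδ => (hdiff'.differentiableAt (Ioi_mem_nhds (pos hδ))).hasDerivAt)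
    (hint.mono_set (Set.Ioi_subset_Ioi (abs_nonneg _))) hk0 hk1
end
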